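/- Let A ⊆ B(H) and B ⊆ B(K) be unital operator algebras and let T : A → B be a linear map. Then T is real positive and contractive (‖T(a)‖ ≤ ‖a‖ for all a) if and only if T(F_A) ⊆ F_B, that is, if and only if ‖1 − T(x)‖ ≤ 1 for every x ∈ A with ‖1 − x‖ ≤ 1. -/

import Mathlib

/-!
The substance is that a real positive contraction `T` maps `𝔉_A` into `𝔉_B`; this is a
von Neumann type inequality. For `‖1 - x‖ ≤ 1` and `0 < r < 1` put `c = r (1 - x)`. The truncated
Poisson kernels `2 ∑_{j<n} ω^j c^j - 1 + ε_n`, with `|ω| = 1` and `ε_n → 0`, are accretive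
(`poisson_nonneg`), so their images under `T` are as well. Since `0 ≤ T 1 ≤ 1`, adding
`1 - T 1` times the scalar kernel with `c` replaced by `r` shows that
`2 ∑_{j<n} ω^j S_j - 1 + ε_n` is accretive, where `S_j = T (c^j) + r^j (1 - T 1)` and `S_0 = 1`.
Testing on `ξ + ω⁻¹ η` and averaging over the roots of unity of order `n + 1` isolates `S_1`:
`0 ≤ (1 + ε_n) (‖ξ‖² + ‖η‖²) + 2 Re ⟪ξ, S_1 η⟫`. As `n → ∞` this gives
`‖S_1‖ ≤ 1` (`norm_le_one_of_kernel`), and `S_1 = r (1 - T x)`. Finally `r → 1`.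

For the converse, contractivity follows by applying the hypothesis to `1 ± a` with `‖a‖ ≤ 1`.
For accretive `a` and small `t > 0` one has `‖1 - t a‖ ≤ 1 + O(t²)`, whence
`‖1 - t T a‖ ≤ 1 + O(t²)`, and so `Re ⟪ξ, T a ξ⟫ ≥ -O(t)` for every unit vector `ξ`.
-/

set_option maxHeartbeats 1000000
set_option synthInstance.maxHeartbeats 1000000

open ContinuousLinearMap
open Filter Topology
open Finset (range mem_range)

/-! ### Accretive operators and truncated Poisson kernels -/

theorem isPositive_add_adjoint_iff {H : Type*} [NormedAddCommGroup H] [InnerProductSpace ℂ H]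
    [CompleteSpace H] (a : H →L[ℂ] H) :
    (a + adjoint a).IsPositive ↔ ∀ v, 0 ≤ (inner ℂ v (a v)).re := by
  have key : ∀ v, (a + adjoint a).reApplyInnerSelf v = 2 * (inner ℂ v (a v)).re := by
    intro v
    rw [reApplyInnerSelf_apply, add_apply, inner_add_left, adjoint_inner_left,
      map_add, ← inner_conj_symm (a v) v]
    simp only [RCLike.re_to_complex, Complex.conj_re]
    ring
  rw [isPositive_def']
  constructor
  · intro h v
    have := h.2 v
    rw [key] at this
    linarith
  · intro h
    refine ⟨?_, fun v => ?_⟩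
    · rw [← star_eq_adjoint]
      exact IsSelfAdjoint.add_star_self a
    · rw [key]
      linarith [h v]

/-- The truncated Poisson kernel `2 ∑_{j<n} b^j - 1 + ε` of a strict contraction `b` is accretive,
with an error `ε` that tends to `0` as `n → ∞`. -/
theorem poisson_nonneg {H : Type*} [NormedAddCommGroup H] [InnerProductSpace ℂ H]
    (b : H →L[ℂ] H) (r : ℝ) (hr0 : 0 ≤ r) (hr1 : r < 1) (hb : ‖b‖ ≤ r) (n : ℕ) (v : H) :
    0 ≤ (2 * inner ℂ v (∑ j ∈ range n, (b ^ j) v)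
      + ((-1 + (2 * r ^ n + 2 * (r ^ n / (1 - r))) : ℝ) : ℂ) * inner ℂ v v).re := by
  set s : H := ∑ j ∈ range n, (b ^ j) v with hs
  have hpow : ∀ j, ‖(b ^ j) v‖ ≤ r ^ j * ‖v‖ := by
    intro j
    induction j with
    | zero => simp
    | succ k ih =>
      rw [pow_succ', mul_apply_eq_comp, pow_succ']
      calc ‖b ((b ^ k) v)‖ ≤ ‖b‖ * ‖(b ^ k) v‖ := b.le_opNorm _
        _ ≤ r * (r ^ k * ‖v‖) := by gcongr
        _ = _ := by ring
  have hsb : s - b s = v - (b ^ n) v := by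
    rw [hs, map_sum, ← Finset.sum_sub_distrib]
    have := Finset.sum_range_sub' (fun j => (b ^ j) v) n
    simp only [pow_zero, one_apply_eq_self] at this
    rw [← this]
    refine Finset.sum_congr rfl fun j _ => ?_
    rw [pow_succ', mul_apply_eq_comp]
  have hsn : ‖s‖ ≤ ‖v‖ / (1 - r) := by
    calc ‖s‖ ≤ ∑ j ∈ range n, r ^ j * ‖v‖ := norm_sum_le_of_le _ fun j _ => hpow j
      _ = (∑ j ∈ range n, r ^ j) * ‖v‖ := by rw [Finset.sum_mul]
      _ ≤ (1 - r)⁻¹ * ‖v‖ := by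
        gcongr
        rw [← tsum_geometric_of_lt_one hr0 hr1]
        exact (summable_geometric_of_lt_one hr0 hr1).sum_le_tsum _ fun i _ => by positivity
      _ = _ := by ring
  have hbs : ‖b s‖ ≤ ‖s‖ := by
    calc ‖b s‖ ≤ ‖b‖ * ‖s‖ := b.le_opNorm _
      _ ≤ 1 * ‖s‖ := by gcongr; linarith
      _ = _ := one_mul _
  have hv : v = (s - b s) + (b ^ n) v := by rw [hsb]; abel
  have h1 : (inner ℂ v s).re = (inner ℂ (s - b s) s).re + (inner ℂ ((b ^ n) v) s).re := by
    conv_lhs => rw [hv, inner_add_left]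
    exact Complex.add_re _ _
  -- Polarization: `2 Re ⟪s - b s, s⟫ = ‖s - b s‖² + ‖s‖² - ‖b s‖²`.
  have h2 : ‖b s‖ ^ 2 = ‖s - b s‖ ^ 2 - 2 * (inner ℂ (s - b s) s).re + ‖s‖ ^ 2 := by
    have := norm_sub_sq (𝕜 := ℂ) (s - b s) s
    rw [show s - b s - s = - b s by abel, norm_neg] at this
    exact this
  have h3 : -(r ^ n * ‖v‖ * (‖v‖ / (1 - r))) ≤ (inner ℂ ((b ^ n) v) s).re := by
    have h := (Complex.abs_re_le_norm _).trans (norm_inner_le_norm (𝕜 := ℂ) ((b ^ n) v) s)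
    have h' : ‖(b ^ n) v‖ * ‖s‖ ≤ r ^ n * ‖v‖ * (‖v‖ / (1 - r)) :=
      mul_le_mul (hpow n) hsn (norm_nonneg _) (by positivity)
    linarith [(abs_le.mp h).1]
  have hrn1 : r ^ n ≤ 1 := pow_le_one₀ hr0 hr1.le
  have h4 : (1 - r ^ n) * ‖v‖ ≤ ‖s - b s‖ := by
    rw [hsb]
    have := norm_sub_norm_le v ((b ^ n) v)
    linarith [hpow n]
  have h5 : ((1 - r ^ n) * ‖v‖) ^ 2 ≤ ‖s - b s‖ ^ 2 :=
    pow_le_pow_left₀ (mul_nonneg (by linarith) (norm_nonneg _)) h4 2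
  have h6 : ‖b s‖ ^ 2 ≤ ‖s‖ ^ 2 := pow_le_pow_left₀ (norm_nonneg _) hbs 2
  have h7 : r ^ n * ‖v‖ * (‖v‖ / (1 - r)) = (r ^ n / (1 - r)) * ‖v‖ ^ 2 := by ring
  have hvv : (inner ℂ v v : ℂ) = ((‖v‖ ^ 2 : ℝ) : ℂ) := by
    rw [inner_self_eq_norm_sq_to_K]; push_cast; rfl
  rw [hvv, ← Complex.ofReal_mul, Complex.add_re, Complex.ofReal_re, Complex.mul_re, h1]
  simp only [Complex.re_ofNat, Complex.im_ofNat, zero_mul, sub_zero]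
  rw [h7] at h3
  nlinarith [sq_nonneg (r ^ n * ‖v‖)]

/-! ### Coefficient bound by averaging over roots of unity -/

theorem sum_root_pow (N : ℕ) (ζ : ℂ) (hζ : IsPrimitiveRoot ζ N) (m : ℕ) :
    ∑ k ∈ range N, (ζ ^ k) ^ m = if N ∣ m then (N : ℂ) else 0 := by
  have h : ∀ k, (ζ ^ k) ^ m = (ζ ^ m) ^ k := fun k => by rw [← pow_mul, ← pow_mul, mul_comm]
  simp only [h]
  split_ifs with hd
  · rw [(hζ.pow_eq_one_iff_dvd m).2 hd]; simp
  · have h1 : ζ ^ m ≠ 1 := fun e => hd ((hζ.pow_eq_one_iff_dvd m).1 e)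
    rw [geom_sum_eq h1, ← pow_mul, mul_comm, pow_mul, hζ.pow_eq_one]
    simp

/-- Averaging `ω^j ⟪v, S v⟫` at `v = ξ + ω⁻¹ η` over the roots of unity `ω` of order `n + 1`, where
`ω⁻¹ = ω^n`, leaves only the diagonal terms for `j = 0`, only `⟪ξ, S η⟫` for `j = 1`, and nothing
for `1 < j < n`. The order exceeds `n` so that the exponent `j + 1` never vanishes modulo it. -/
theorem average_coeff {K : Type*} [NormedAddCommGroup K] [InnerProductSpace ℂ K]
    (S : K →L[ℂ] K) (n : ℕ) (hn : 2 ≤ n) (ζ : ℂ) (hζ : IsPrimitiveRoot ζ (n + 1))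
    (ξ η : K) (j : ℕ) (hj : j < n) :
    ∑ k ∈ range (n + 1), (ζ ^ k) ^ j *
        inner ℂ (ξ + ((ζ ^ k) ^ n) • η) (S (ξ + ((ζ ^ k) ^ n) • η)) =
      (n + 1) * ((if j = 0 then inner ℂ ξ (S ξ) + inner ℂ η (S η) else 0)
        + (if j = 1 then inner ℂ ξ (S η) else 0)) := by
  have hterm : ∀ k, (ζ ^ k) ^ j *
        inner ℂ (ξ + ((ζ ^ k) ^ n) • η) (S (ξ + ((ζ ^ k) ^ n) • η)) =
      (ζ ^ k) ^ j * (inner ℂ ξ (S ξ) + inner ℂ η (S η)) + (ζ ^ k) ^ (j + n) * inner ℂ ξ (S η)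
        + (ζ ^ k) ^ (j + 1) * inner ℂ η (S ξ) := by
    intro k
    set ω := ζ ^ k with hω
    have hω1 : ω ^ n * ω = 1 := by
      rw [← pow_succ, hω, ← pow_mul, mul_comm, pow_mul, hζ.pow_eq_one, one_pow]
    have hnorm : ‖ω‖ = 1 := by
      rw [hω, norm_pow, hζ.norm'_eq_one (by omega), one_pow]
    have hconj : (starRingEnd ℂ) (ω ^ n) = ω := by
      have h1 : (starRingEnd ℂ) (ω ^ n) * ω ^ n = 1 := by
        rw [mul_comm, Complex.mul_conj, Complex.normSq_eq_norm_sq, norm_pow, hnorm]; simp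
      calc (starRingEnd ℂ) (ω ^ n) = (starRingEnd ℂ) (ω ^ n) * (ω ^ n * ω) := by
            rw [hω1, mul_one]
        _ = ω := by rw [← mul_assoc, h1, one_mul]
    rw [map_add, map_smul, inner_add_left, inner_add_right, inner_add_right, inner_smul_left,
      inner_smul_left, inner_smul_right, inner_smul_right, hconj]
    linear_combination (ω ^ j * inner ℂ η (S η)) * hω1
  simp only [hterm, Finset.sum_add_distrib, ← Finset.sum_mul, sum_root_pow _ _ hζ]
  have d0 : (n + 1 ∣ j) ↔ j = 0 :=
    ⟨fun h => Nat.eq_zero_of_dvd_of_lt h (by omega), fun h => by simp [h]⟩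
  have d1 : (n + 1 ∣ j + n) ↔ j = 1 := by
    constructor
    · rintro ⟨q, hq⟩
      have : q < 2 := by by_contra! h; nlinarith
      interval_cases q <;> omega
    · rintro rfl; exact ⟨1, by ring⟩
  have d2 : ¬ (n + 1 ∣ j + 1) := fun h => by
    have := Nat.le_of_dvd (by omega) h
    omega
  simp only [d0, d1, if_neg d2]
  split_ifs <;> push_cast <;> ring

/-- Operator version of Carathéodory's coefficient bound: if the operator polynomials
`2 ∑_{j<n} ω^j S_j - 1`, with `S_0 = 1`, are accretive for all unimodular `ω` up to errors
`ε n → 0`, then `S_1` is a contraction. -/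
theorem norm_le_one_of_kernel {K : Type*} [NormedAddCommGroup K] [InnerProductSpace ℂ K]
    (S : ℕ → K →L[ℂ] K) (hS0 : S 0 = 1) (ε : ℕ → ℝ) (hε : Tendsto ε atTop (𝓝 0))
    (h : ∀ n, ∀ ω : ℂ, ‖ω‖ = 1 → ∀ v : K,
      0 ≤ (2 * (∑ j ∈ range n, ω ^ j * inner ℂ v (S j v))
        + ((-1 + ε n : ℝ) : ℂ) * inner ℂ v v).re) :
    ‖S 1‖ ≤ 1 := by
  have key : ∀ ξ η : K, ∀ n, 2 ≤ n →
      0 ≤ (1 + ε n) * (‖ξ‖ ^ 2 + ‖η‖ ^ 2) + 2 * (inner ℂ ξ (S 1 η)).re := by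
    intro ξ η n hn
    set ζ := Complex.exp (2 * Real.pi * Complex.I / ((n + 1 : ℕ) : ℂ)) with hζdef
    have hζ : IsPrimitiveRoot ζ (n + 1) := Complex.isPrimitiveRoot_exp _ (by omega)
    have hsum : 0 ≤ (∑ k ∈ range (n + 1),
        (2 * (∑ j ∈ range n, (ζ ^ k) ^ j *
            inner ℂ (ξ + ((ζ ^ k) ^ n) • η) (S j (ξ + ((ζ ^ k) ^ n) • η)))
          + ((-1 + ε n : ℝ) : ℂ) *
            inner ℂ (ξ + ((ζ ^ k) ^ n) • η) (ξ + ((ζ ^ k) ^ n) • η))).re := by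
      rw [Complex.re_sum]
      refine Finset.sum_nonneg fun k _ => h n _ ?_ _
      rw [norm_pow, hζ.norm'_eq_one (by omega), one_pow]
    have hone := average_coeff (1 : K →L[ℂ] K) n hn ζ hζ ξ η 0 (by omega)
    simp only [pow_zero, one_mul, one_apply_eq_self] at hone
    rw [Finset.sum_add_distrib, ← Finset.mul_sum, ← Finset.mul_sum, Finset.sum_comm, hone,
      Finset.sum_congr rfl fun j hj => average_coeff (S j) n hn ζ hζ ξ η j (mem_range.1 hj),
      ← Finset.mul_sum, Finset.sum_add_distrib, Finset.sum_ite_eq' (range n) 0,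
      Finset.sum_ite_eq' (range n) 1] at hsum
    simp only [mem_range, show 0 < n by omega, show 1 < n by omega, if_true, hS0, one_apply_eq_self,
      show ¬ (0 = 1) by omega, if_false, add_zero] at hsum
    have hvv : ∀ v : K, (inner ℂ v v : ℂ) = ((‖v‖ ^ 2 : ℝ) : ℂ) := fun v => by
      rw [inner_self_eq_norm_sq_to_K]; push_cast; rfl
    rw [hvv, hvv] at hsum
    have e : ((2 : ℂ) * ((n + 1) * ((((‖ξ‖ ^ 2 : ℝ) : ℂ) + ((‖η‖ ^ 2 : ℝ) : ℂ))
        + inner ℂ ξ (S 1 η))) + ((-1 + ε n : ℝ) : ℂ) * ((n + 1) *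
          (((‖ξ‖ ^ 2 : ℝ) : ℂ) + ((‖η‖ ^ 2 : ℝ) : ℂ)))) =
        ((n + 1 : ℝ) : ℂ) * (((1 + ε n) * (‖ξ‖ ^ 2 + ‖η‖ ^ 2) : ℝ) + (2 : ℝ) *
          inner ℂ ξ (S 1 η)) := by
      push_cast; ring
    rw [e, Complex.re_ofReal_mul, Complex.add_re, Complex.ofReal_re, Complex.re_ofReal_mul] at hsum
    exact nonneg_of_mul_nonneg_right hsum (by positivity)
  have lim : ∀ ξ η : K, 0 ≤ (‖ξ‖ ^ 2 + ‖η‖ ^ 2) + 2 * (inner ℂ ξ (S 1 η)).re := by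
    intro ξ η
    have ht : Tendsto (fun n => (1 + ε n) * (‖ξ‖ ^ 2 + ‖η‖ ^ 2) + 2 * (inner ℂ ξ (S 1 η)).re)
        atTop (𝓝 ((1 + 0) * (‖ξ‖ ^ 2 + ‖η‖ ^ 2) + 2 * (inner ℂ ξ (S 1 η)).re)) :=
      ((hε.const_add 1).mul_const _).add_const _
    have := ge_of_tendsto ht (eventually_atTop.2 ⟨2, fun n hn => key ξ η n hn⟩)
    simpa using this
  refine ContinuousLinearMap.opNorm_le_bound _ zero_le_one fun η => ?_
  have := lim (-(S 1 η)) η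
  have hvv : (inner ℂ (S 1 η) (S 1 η) : ℂ).re = ‖S 1 η‖ ^ 2 := by
    rw [inner_self_eq_norm_sq_to_K]; norm_cast
  rw [inner_neg_left, norm_neg, Complex.neg_re, hvv] at this
  rw [one_mul]
  exact le_of_sq_le_sq (by linarith) (norm_nonneg _)

/-! ### Real positive contractions preserve the shifted unit ball -/

theorem maps_F_of_realPositive {H K : Type*} [NormedAddCommGroup H] [InnerProductSpace ℂ H]
    [NormedAddCommGroup K] [InnerProductSpace ℂ K]
    (A : Subalgebra ℂ (H →L[ℂ] H)) (B : Subalgebra ℂ (K →L[ℂ] K)) (T : A →ₗ[ℂ] B)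
    (hpos : ∀ a : A, (∀ v, 0 ≤ (inner ℂ v ((a : H →L[ℂ] H) v)).re) →
      ∀ v, 0 ≤ (inner ℂ v ((T a : K →L[ℂ] K) v)).re)
    (hcon : ∀ a : A, ‖(T a : K →L[ℂ] K)‖ ≤ ‖(a : H →L[ℂ] H)‖)
    (x : A) (hx : ‖1 - (x : H →L[ℂ] H)‖ ≤ 1) : ‖1 - (T x : K →L[ℂ] K)‖ ≤ 1 := by
  set P : K →L[ℂ] K := 1 - (T 1 : K →L[ℂ] K) with hP
  -- Both `T (i 1)` and `T (-i 1)` are accretive, so the quadratic form of `T 1` is real.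
  have him : ∀ v, (inner ℂ v ((T 1 : K →L[ℂ] K) v)).im = 0 := by
    intro v
    have hz : ∀ z : ℂ, z.re = 0 → 0 ≤ (z * inner ℂ v ((T 1 : K →L[ℂ] K) v)).re := by
      intro z hz
      have := hpos (z • 1) (fun w => by
        have hw : (inner ℂ w w : ℂ) = ((‖w‖ ^ 2 : ℝ) : ℂ) := by
          rw [inner_self_eq_norm_sq_to_K]; push_cast; rfl
        simp only [SetLike.val_smul, OneMemClass.coe_one, FunLike.coe_smul, Pi.smul_apply, one_apply_eq_self,
          inner_smul_right]
        rw [hw, Complex.re_mul_ofReal, hz, zero_mul]) v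
      simpa only [map_smul, SetLike.val_smul, FunLike.coe_smul, Pi.smul_apply, inner_smul_right] using this
    have h1 := hz Complex.I (by simp)
    have h2 := hz (-Complex.I) (by simp)
    simp at h1 h2
    linarith
  have hTone : ‖(T 1 : K →L[ℂ] K)‖ ≤ 1 := (hcon 1).trans (by
    rw [OneMemClass.coe_one]; exact ContinuousLinearMap.norm_id_le)
  have hPq : ∀ v, ∃ p : ℝ, 0 ≤ p ∧ (inner ℂ v (P v) : ℂ) = (p : ℂ) := by
    intro v
    have hvv : (inner ℂ v v : ℂ) = ((‖v‖ ^ 2 : ℝ) : ℂ) := by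
      rw [inner_self_eq_norm_sq_to_K]; push_cast; rfl
    refine ⟨‖v‖ ^ 2 - (inner ℂ v ((T 1 : K →L[ℂ] K) v)).re, ?_, ?_⟩
    · have h1 := (Complex.re_le_norm _).trans
        (norm_inner_le_norm (𝕜 := ℂ) v ((T 1 : K →L[ℂ] K) v))
      have h2 := (T 1 : K →L[ℂ] K).le_of_opNorm_le hTone v
      nlinarith [norm_nonneg v]
    · rw [hP, sub_apply, inner_sub_right, one_apply_eq_self, hvv]
      apply Complex.ext <;> simp [him]
  have main : ∀ r : ℝ, 0 < r → r < 1 → r * ‖1 - (T x : K →L[ℂ] K)‖ ≤ 1 := by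
    intro r hr0 hr1
    set c : A := (r : ℂ) • (1 - x) with hc
    have hcn : ‖(c : H →L[ℂ] H)‖ ≤ r := by
      rw [hc]
      simp only [SetLike.val_smul, AddSubgroupClass.coe_sub, OneMemClass.coe_one, norm_smul,
        Complex.norm_real, Real.norm_eq_abs, abs_of_pos hr0]
      nlinarith
    have hrn : Tendsto (fun n : ℕ => r ^ n) atTop (𝓝 0) :=
      tendsto_pow_atTop_nhds_zero_of_lt_one hr0.le hr1
    have hε : Tendsto (fun n : ℕ => 2 * r ^ n + 2 * (r ^ n / (1 - r))) atTop (𝓝 0) := by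
      simpa using (hrn.const_mul 2).add ((hrn.div_const (1 - r)).const_mul 2)
    have hS := norm_le_one_of_kernel
      (fun j => (T (c ^ j) : K →L[ℂ] K) + ((r : ℂ) ^ j) • P)
      (by simp [hP]) _ hε (by
        intro n ω hω v
        set e : ℝ := 2 * r ^ n + 2 * (r ^ n / (1 - r)) with he
        have hA := hpos ((2 : ℂ) • (∑ j ∈ range n, ω ^ j • c ^ j) + ((-1 + e : ℝ) : ℂ) • 1)
          (fun w => by
            have := poisson_nonneg (ω • (c : H →L[ℂ] H)) r hr0.le hr1
              (by rw [norm_smul, hω, one_mul]; exact hcn) n w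
            rw [← he] at this
            refine this.trans_eq (congrArg Complex.re ?_)
            symm
            simp [smul_pow, sum_apply]) v
        have hC := poisson_nonneg ((ω * r) • (1 : ℂ →L[ℂ] ℂ)) r hr0.le hr1
          (by rw [norm_smul, norm_mul, hω]; simp [abs_of_pos hr0]) n 1
        rw [← he] at hC
        obtain ⟨p, hp, hpv⟩ := hPq v
        have hsum := add_nonneg hA (mul_nonneg hp hC)
        rw [← Complex.re_ofReal_mul, ← Complex.add_re] at hsum
        refine hsum.trans_eq (congrArg Complex.re ?_)
        symm
        have hv1 : (inner ℂ v v : ℂ) = inner ℂ v ((T 1 : K →L[ℂ] K) v) + p := by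
          rw [← hpv, hP, sub_apply, one_apply_eq_self, inner_sub_right]; ring
        rw [hv1]
        simp [smul_pow, sum_apply, hpv, mul_add,
          Finset.sum_add_distrib, mul_pow, Finset.mul_sum]
        ring_nf)
    have hS1 : (T (c ^ 1) : K →L[ℂ] K) + ((r : ℂ) ^ 1) • P
        = (r : ℂ) • (1 - (T x : K →L[ℂ] K)) := by
      rw [pow_one, pow_one, hc, hP, map_smul, map_sub, SetLike.val_smul,
        AddSubgroupClass.coe_sub, ← smul_add]
      congr 1
      abel
    simp only [hS1, norm_smul, Complex.norm_real, Real.norm_eq_abs, abs_of_pos hr0] at hS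
    exact hS
  by_contra! hlt
  set m := ‖1 - (T x : K →L[ℂ] K)‖ with hm
  -- The radius `r = 2 / (1 + m) < 1` satisfies `r m > 1`.
  have := main (2 / (1 + m)) (by positivity) (by rw [div_lt_one (by positivity)]; linarith)
  rw [div_mul_eq_mul_div, div_le_one (by positivity)] at this
  linarith

/-! ### The converse -/

theorem contractive_of_maps_F {H K : Type*} [NormedAddCommGroup H] [InnerProductSpace ℂ H]
    [NormedAddCommGroup K] [InnerProductSpace ℂ K]
    (A : Subalgebra ℂ (H →L[ℂ] H)) (B : Subalgebra ℂ (K →L[ℂ] K)) (T : A →ₗ[ℂ] B)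
    (hF : ∀ x : A, ‖1 - (x : H →L[ℂ] H)‖ ≤ 1 → ‖1 - (T x : K →L[ℂ] K)‖ ≤ 1)
    (a : A) : ‖(T a : K →L[ℂ] K)‖ ≤ ‖(a : H →L[ℂ] H)‖ := by
  have unit : ∀ b : A, ‖(b : H →L[ℂ] H)‖ ≤ 1 → ‖(T b : K →L[ℂ] K)‖ ≤ 1 := by
    intro b hb
    have h1 := hF (1 + b) (by simpa using hb)
    have h2 := hF (1 - b) (by simpa using hb)
    have e : (2 : ℂ) • (T b : K →L[ℂ] K)
        = (1 - (T (1 - b) : K →L[ℂ] K)) - (1 - (T (1 + b) : K →L[ℂ] K)) := by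
      rw [map_add, map_sub, AddSubgroupClass.coe_sub, AddMemClass.coe_add, two_smul]
      abel
    have h3 := norm_sub_le (1 - (T (1 - b) : K →L[ℂ] K)) (1 - (T (1 + b) : K →L[ℂ] K))
    rw [← e, norm_smul] at h3
    rw [Complex.norm_ofNat] at h3
    linarith
  rcases eq_or_ne a 0 with rfl | ha
  · simp
  have hpos : 0 < ‖(a : H →L[ℂ] H)‖ := norm_pos_iff.2 (by simpa using ha)
  have := unit (((‖(a : H →L[ℂ] H)‖⁻¹ : ℝ) : ℂ) • a) (by
    rw [SetLike.val_smul, norm_smul, Complex.norm_real, norm_inv, norm_norm]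
    exact (inv_mul_cancel₀ hpos.ne').le)
  rw [map_smul, SetLike.val_smul, norm_smul, Complex.norm_real, norm_inv, norm_norm,
    inv_mul_le_iff₀ hpos, mul_one] at this
  exact this

theorem realPositive_of_maps_F {H K : Type*} [NormedAddCommGroup H] [InnerProductSpace ℂ H]
    [NormedAddCommGroup K] [InnerProductSpace ℂ K]
    (A : Subalgebra ℂ (H →L[ℂ] H)) (B : Subalgebra ℂ (K →L[ℂ] K)) (T : A →ₗ[ℂ] B)
    (hF : ∀ x : A, ‖1 - (x : H →L[ℂ] H)‖ ≤ 1 → ‖1 - (T x : K →L[ℂ] K)‖ ≤ 1)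
    (a : A) (ha : ∀ v, 0 ≤ (inner ℂ v ((a : H →L[ℂ] H) v)).re) (v : K) :
    0 ≤ (inner ℂ v ((T a : K →L[ℂ] K) v)).re := by
  set C : ℝ := ‖(a : H →L[ℂ] H)‖ ^ 2 with hC
  have hC0 : 0 ≤ C := by positivity
  have hone : ‖1 - (T 1 : K →L[ℂ] K)‖ ≤ 1 := hF 1 (by simp)
  have bound : ∀ t : ℝ, 0 < t → ‖1 - (t : ℂ) • (T a : K →L[ℂ] K)‖ ≤ 1 + 2 * (t ^ 2 * C) := by
    intro t ht
    set M : ℝ := 1 + t ^ 2 * C with hM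
    have hM0 : 0 < M := by positivity
    have hMC : (M : ℂ) ≠ 0 := by exact_mod_cast hM0.ne'
    have hnorm : ‖1 - (t : ℂ) • (a : H →L[ℂ] H)‖ ≤ M := by
      refine ContinuousLinearMap.opNorm_le_bound _ hM0.le fun w => ?_
      have h1 := norm_sub_sq (𝕜 := ℂ) w ((t : ℂ) • (a : H →L[ℂ] H) w)
      have h2 : 0 ≤ (inner ℂ w ((t : ℂ) • (a : H →L[ℂ] H) w)).re := by
        rw [inner_smul_right, Complex.re_ofReal_mul]
        exact mul_nonneg ht.le (ha w)
      have h3 : ‖(t : ℂ) • (a : H →L[ℂ] H) w‖ ^ 2 ≤ t ^ 2 * C * ‖w‖ ^ 2 := by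
        have h := pow_le_pow_left₀ (norm_nonneg _) ((a : H →L[ℂ] H).le_opNorm w) 2
        rw [mul_pow, ← hC] at h
        rw [norm_smul, Complex.norm_real, Real.norm_eq_abs, mul_pow, sq_abs, mul_assoc]
        exact mul_le_mul_of_nonneg_left h (sq_nonneg t)
      simp only [sub_apply, one_apply_eq_self, FunLike.coe_smul, Pi.smul_apply]
      refine le_of_sq_le_sq ?_ (by positivity)
      have h4 : ‖w - (t : ℂ) • (a : H →L[ℂ] H) w‖ ^ 2 ≤ M * ‖w‖ ^ 2 := by
        rw [h1, hM]
        simp only [RCLike.re_to_complex]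
        nlinarith
      have h5 : M * ‖w‖ ^ 2 ≤ M ^ 2 * ‖w‖ ^ 2 := by
        gcongr
        nlinarith [mul_nonneg (sq_nonneg t) hC0]
      calc _ ≤ _ := h4.trans h5
        _ = _ := by ring
    have h := hF (1 - (M⁻¹ : ℂ) • (1 - (t : ℂ) • a)) (by
      simp only [AddSubgroupClass.coe_sub, OneMemClass.coe_one, SetLike.val_smul, sub_sub_cancel,
        norm_smul, norm_inv, Complex.norm_real, Real.norm_eq_abs, abs_of_pos hM0]
      rwa [inv_mul_le_iff₀ hM0, mul_one])
    have e : 1 - (t : ℂ) • (T a : K →L[ℂ] K)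
        = (M : ℂ) • (1 - (T (1 - (M⁻¹ : ℂ) • (1 - (t : ℂ) • a)) : K →L[ℂ] K))
          - ((t ^ 2 * C : ℝ) : ℂ) • (1 - (T 1 : K →L[ℂ] K)) := by
      simp only [map_sub, map_smul, AddSubgroupClass.coe_sub, SetLike.val_smul, smul_sub,
        smul_smul, mul_inv_cancel₀ hMC]
      have hMe : (M : ℂ) = 1 + ((t ^ 2 * C : ℝ) : ℂ) := by rw [hM]; push_cast; ring
      rw [← mul_assoc, mul_inv_cancel₀ hMC, hMe]
      module
    rw [e]
    refine (norm_sub_le _ _).trans ?_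
    rw [norm_smul, norm_smul, Complex.norm_real, Complex.norm_real, Real.norm_eq_abs,
      Real.norm_eq_abs, abs_of_pos hM0, abs_of_nonneg (by positivity : 0 ≤ t ^ 2 * C)]
    have := mul_le_mul_of_nonneg_left h hM0.le
    have := mul_le_mul_of_nonneg_left hone (by positivity : 0 ≤ t ^ 2 * C)
    linarith
  have hlow : ∀ t : ℝ, 0 < t →
      -(2 * (C * ‖v‖ ^ 2)) * t ≤ (inner ℂ v ((T a : K →L[ℂ] K) v)).re := by
    intro t ht
    have h1 := (Complex.re_le_norm _).trans
      (norm_inner_le_norm (𝕜 := ℂ) v ((1 - (t : ℂ) • (T a : K →L[ℂ] K)) v))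
    have h2 := (1 - (t : ℂ) • (T a : K →L[ℂ] K)).le_of_opNorm_le (bound t ht) v
    have hvv : (inner ℂ v v : ℂ) = ((‖v‖ ^ 2 : ℝ) : ℂ) := by
      rw [inner_self_eq_norm_sq_to_K]; push_cast; rfl
    have h3 := mul_le_mul_of_nonneg_left h2 (norm_nonneg v)
    have h4 := h1.trans h3
    simp only [sub_apply, one_apply_eq_self, FunLike.coe_smul, Pi.smul_apply, inner_sub_right, inner_smul_right,
      hvv, Complex.sub_re, Complex.ofReal_re, Complex.re_ofReal_mul] at h4
    have h5 : t * (-(2 * (C * ‖v‖ ^ 2)) * t) ≤ t * (inner ℂ v ((T a : K →L[ℂ] K) v)).re := by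
      linarith
    exact le_of_mul_le_mul_left h5 ht
  have ht : Tendsto (fun t : ℝ => -(2 * (C * ‖v‖ ^ 2)) * t) (𝓝[>] 0)
      (𝓝 (-(2 * (C * ‖v‖ ^ 2)) * 0)) :=
    (tendsto_id.const_mul _).mono_left nhdsWithin_le_nhds
  rw [mul_zero] at ht
  exact le_of_tendsto ht (eventually_nhdsWithin_of_forall fun t h => hlow t h)




/-- A linear map between unital operator algebras is real positive and contractive
if and only if it maps `𝔉_A` into `𝔉_B`. -/
theorem stmt_5 {H K : Type*} [NormedAddCommGroup H] [InnerProductSpace ℂ H] [CompleteSpace H]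
    [NormedAddCommGroup K] [InnerProductSpace ℂ K] [CompleteSpace K]
    (A : Subalgebra ℂ (H →L[ℂ] H)) (hA : IsClosed (A : Set (H →L[ℂ] H)))
    (B : Subalgebra ℂ (K →L[ℂ] K)) (hB : IsClosed (B : Set (K →L[ℂ] K)))
    (T : A →ₗ[ℂ] B) :
    ((∀ a : A, ((a : H →L[ℂ] H) + adjoint (a : H →L[ℂ] H)).IsPositive →
        ((T a : K →L[ℂ] K) + adjoint (T a : K →L[ℂ] K)).IsPositive) ∧
      ∀ a : A, ‖(T a : K →L[ℂ] K)‖ ≤ ‖(a : H →L[ℂ] H)‖) ↔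
    ∀ x : A, ‖1 - (x : H →L[ℂ] H)‖ ≤ 1 → ‖1 - (T x : K →L[ℂ] K)‖ ≤ 1 := by
  simp only [isPositive_add_adjoint_iff]
  exact ⟨fun h => maps_F_of_realPositive A B T h.1 h.2,
    fun h => ⟨realPositive_of_maps_F A B T h, contractive_of_maps_F A B T h⟩⟩
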